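/- arXiv:1001.2381 — 2 statements merged into one kernel-verified Lean document; each statement's English description precedes it below -/
import Mathlib

section
/- Let T > 0 and let x and x_n (n ∈ ℕ) be càdlàg functions on [0,T]. Suppose x_n → x in M₁, i.e., there exist parametric representations (u_n⁰, r_n⁰) ∈ Π(x_n) and (u⁰, r⁰) ∈ Π(x) with max(‖u_n⁰ − u⁰‖, ‖r_n⁰ − r⁰‖) → 0. Then there exist parametric representations (u, r) ∈ Π(x) and (u_n, r_n) ∈ Π(x_n) with max(‖u_n − u‖, ‖r_n − r‖) → 0 such that r and every r_n are absolutely continuous with respect to Lebesgue measure on [0,1], with derivatives r′ and r′_n satisfying ‖r′_n − r′‖₁ → 0 as n → ∞, ess sup |r′| < ∞, and sup_{n≥1} ess sup |r′_n| < ∞. (Theorem 1.2.) -/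
open Set Filter MeasureTheory Topology

/-- The left limit of `x` at `t`, with the convention `x(0−) = x(0)`. -/
noncomputable def leftL (x : ℝ → ℝ) (t : ℝ) : ℝ :=
  if t = 0 then x 0 else Function.leftLim x t

/-- `x` is càdlàg on `[0, T]`: right-continuous on `[0, T)` and with left limits on `(0, T]`. -/
def IsCadlagOn (T : ℝ) (x : ℝ → ℝ) : Prop :=
  (∀ t ∈ Set.Ico (0:ℝ) T, Filter.Tendsto x (nhdsWithin t (Set.Ici t)) (nhds (x t))) ∧
  (∀ t ∈ Set.Ioc (0:ℝ) T, ∃ L : ℝ, Filter.Tendsto x (nhdsWithin t (Set.Iio t)) (nhds L))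

/-- `(u, r)` is a parametric representation of the càdlàg function `x` on `[0, T]`. -/
def IsParamRep (T : ℝ) (x u r : ℝ → ℝ) : Prop :=
  ContinuousOn u (Set.Icc 0 1) ∧ ContinuousOn r (Set.Icc 0 1) ∧
  MonotoneOn r (Set.Icc 0 1) ∧ r 0 = 0 ∧ r 1 = T ∧
  (∀ s ∈ Set.Icc (0:ℝ) 1, u s ∈ segment ℝ (leftL x (r s)) (x (r s))) ∧
  (∀ t ∈ Set.Icc (0:ℝ) T, ∀ v ∈ segment ℝ (leftL x t) (x t),
    ∃ s ∈ Set.Icc (0:ℝ) 1, r s = t ∧ u s = v) ∧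
  (∀ s₁ ∈ Set.Icc (0:ℝ) 1, ∀ s₂ ∈ Set.Icc (0:ℝ) 1, s₁ ≤ s₂ → r s₁ = r s₂ →
    0 ≤ (u s₂ - u s₁) * (x (r s₁) - leftL x (r s₁)))

/-- Uniform norm over `[0, 1]`. -/
noncomputable def unif (f : ℝ → ℝ) : ℝ := ⨆ s : Set.Icc (0:ℝ) 1, |f s.1|

/-- Uniform norm over `[0, T]`. -/
noncomputable def supT (T : ℝ) (f : ℝ → ℝ) : ℝ := ⨆ t : Set.Icc (0:ℝ) T, |f t.1|

/-- The maximum-jump functional `J_max(x)` over `[0, T]`. -/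
noncomputable def Jmax (T : ℝ) (x : ℝ → ℝ) : ℝ :=
  ⨆ t : Set.Icc (0:ℝ) T, |x t.1 - leftL x t.1|

/-- The Skorohod `M₁` metric on `D([0, T], ℝ)`. -/
noncomputable def dM1 (T : ℝ) (x y : ℝ → ℝ) : ℝ :=
  sInf {d : ℝ | ∃ ux rx uy ry : ℝ → ℝ, IsParamRep T x ux rx ∧ IsParamRep T y uy ry ∧
    d = max (unif fun s => ux s - uy s) (unif fun s => rx s - ry s)}

/-- The `L₁` norm over `[0, 1]`. -/
noncomputable def L1norm (g : ℝ → ℝ) : ℝ := ∫ s in (0:ℝ)..1, |g s|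

/-- `r` is absolutely continuous on `[0,1]` with (integrable) derivative `r'`. -/
def AbsContOn01 (r r' : ℝ → ℝ) : Prop :=
  IntervalIntegrable r' MeasureTheory.volume 0 1 ∧
  ∀ s ∈ Set.Icc (0:ℝ) 1, r s = r 0 + ∫ w in (0:ℝ)..s, r' w

/-- `y` is bounded and Borel measurable on `[0, T]`. -/
def BddMeasOn (T : ℝ) (y : ℝ → ℝ) : Prop :=
  (∃ M : ℝ, ∀ t ∈ Set.Icc (0:ℝ) T, |y t| ≤ M) ∧
  Measurable fun t : Set.Icc (0:ℝ) T => y t.1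

/-- The `M₁` oscillation function `w_s(x, δ)` on `[0, T]`. -/
noncomputable def wOsc (T : ℝ) (x : ℝ → ℝ) (δ : ℝ) : ℝ :=
  sSup {v : ℝ | ∃ t ∈ Set.Icc (0:ℝ) T, ∃ t₁ t₂ t₃ : ℝ,
    max 0 (t - δ) ≤ t₁ ∧ t₁ < t₂ ∧ t₂ < t₃ ∧ t₃ ≤ min (t + δ) T ∧
    v = Metric.infDist (x t₂) (segment ℝ (x t₁) (x t₃))}

/-- The ordinary oscillation modulus `ν(x, δ)` on `[0, T]`. -/
noncomputable def nuOsc (T : ℝ) (x : ℝ → ℝ) (δ : ℝ) : ℝ :=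
  sSup {v : ℝ | ∃ t ∈ Set.Icc (0:ℝ) (T - δ), ∃ t₁ ∈ Set.Icc t (t + δ),
    ∃ t₂ ∈ Set.Icc t (t + δ), v = |x t₁ - x t₂|}

/-! Let `δ > 0` and let `q`, `r` be time functions with the same endpoints. Both `q + δ·id` and
`r + δ·id` map `[0, 1]` onto the same interval and the former is injective, so
`q (l s) + δ l(s) = r s + δ s` defines a time change `l`. This one device is used twice.

With `q` the limiting time function and `r` affine, it makes the limiting time function Lipschitz.
With `q = rₙ` and `r` the (now Lipschitz) limit, it replaces `rₙ` by `rₙ ∘ l = r + δ (id - l)`,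
which inherits a Lipschitz bound from `r`, and whose derivative differs from `r'` by `δ (1 - l')`.
As `l` increases from `0` to `1`, the `L₁` norm of that difference is at most `2 δ`. Finally
`δ |l(s) - s| ≤ ‖rₙ - r‖`, so choosing `δ = δₙ → 0` with `‖rₙ - r‖ ≤ δₙ²` makes `lₙ → id`
uniformly, and convergence of the representations survives the time change. -/

open scoped NNReal

lemma continuousOn_of_comp_injOn {X Y Z : Type*} [TopologicalSpace X] [TopologicalSpace Y]
    [TopologicalSpace Z] [T2Space Z] {φ : Y → Z} {l : X → Y} {A : Set X} {B : Set Y}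
    (hB : IsCompact B) (hφ : ContinuousOn φ B) (hinj : InjOn φ B) (hl : MapsTo l A B)
    (hφl : ContinuousOn (φ ∘ l) A) : ContinuousOn l A := by
  have : CompactSpace B := isCompact_iff_compactSpace.1 hB
  have hemb : IsClosedEmbedding (B.domRestrict φ) := hφ.domRestrict.isClosedEmbedding hinj.injective
  have hcont : Continuous (hl.restrict l A B) := hemb.isInducing.continuous_iff.2 hφl.domRestrict
  exact continuousOn_iff_continuous_domRestrict.2 (continuous_subtype_val.comp hcont)

lemma tendstoUniformlyOn_comp_of_uniformContinuousOn {ι α β γ : Type*} [UniformSpace β]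
    [UniformSpace γ] {p : Filter ι} {f : ι → β → γ} {g : β → γ} {l : ι → α → β} {φ : α → β}
    {A : Set α} {S : Set β} (hf : TendstoUniformlyOn f g p S) (hg : UniformContinuousOn g S)
    (hl : TendstoUniformlyOn l φ p A) (hlS : ∀ i, MapsTo (l i) A S) (hφS : MapsTo φ A S) :
    TendstoUniformlyOn (fun i => f i ∘ l i) (g ∘ φ) p A := by
  have hgl : TendstoUniformlyOn (fun i => g ∘ l i) (g ∘ φ) p A :=
    hg.comp_tendstoUniformlyOn_eventually (.of_forall hlS) hφS hl
  intro V hV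
  obtain ⟨W, hW, hWV⟩ := comp_mem_uniformity_sets hV
  filter_upwards [hf W hW, hgl W hW] with i hfi hgli s hs
  exact hWV ⟨g (l i s), hgli s hs, hfi _ (hlS i hs)⟩

lemma exists_pos_tendsto_zero_le_sq {ε : ℕ → ℝ} (hε : Tendsto ε atTop (𝓝 0)) :
    ∃ δ : ℕ → ℝ≥0, (∀ n, 0 < δ n) ∧ Tendsto δ atTop (𝓝 0) ∧ ∀ n, ε n ≤ (δ n : ℝ) ^ 2 := by
  let η : ℕ → ℝ≥0 := fun n => (ε n).toNNReal + 1 / ((n : ℝ≥0) + 1)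
  have hη : Tendsto η atTop (𝓝 0) := by
    simpa only [Real.toNNReal_zero, add_zero] using
      (tendsto_real_toNNReal hε).add (tendsto_one_div_add_atTop_nhds_zero_nat (𝕜 := ℝ≥0))
  refine ⟨fun n => NNReal.sqrt (η n), fun n => NNReal.sqrt_pos.2 (by positivity), ?_, fun n => ?_⟩
  · simpa only [NNReal.sqrt_zero, Function.comp_def] using
      (NNReal.continuous_sqrt.tendsto 0).comp hη
  · calc ε n ≤ (ε n).toNNReal := Real.le_coe_toNNReal _
      _ ≤ η n := by exact_mod_cast le_self_add
      _ = (NNReal.sqrt (η n) : ℝ) ^ 2 := by exact_mod_cast (NNReal.sq_sqrt (η n)).symm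

lemma ae_differentiableAt_of_monotoneOn_Icc {f : ℝ → ℝ} {a b : ℝ} (hf : MonotoneOn f (Icc a b)) :
    ∀ᵐ s ∂volume.restrict (Icc a b), DifferentiableAt ℝ f s := by
  have hdiff := (hf.mono Ioo_subset_Icc_self).ae_differentiableWithinAt measurableSet_Ioo
  rw [← restrict_Ioo_eq_restrict_Icc]
  filter_upwards [hdiff, ae_restrict_mem measurableSet_Ioo] with s hs hmem
  exact hs.differentiableAt (isOpen_Ioo.mem_nhds hmem)

lemma ae_deriv_nonneg_of_monotoneOn_Icc {f : ℝ → ℝ} {a b : ℝ} (hf : MonotoneOn f (Icc a b)) :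
    ∀ᵐ s ∂volume.restrict (Icc a b), 0 ≤ deriv f s := by
  rw [← restrict_Ioo_eq_restrict_Icc]
  filter_upwards [ae_restrict_mem measurableSet_Ioo] with s hs
  rw [← derivWithin_of_mem_nhds (Icc_mem_nhds hs.1 hs.2)]
  exact hf.derivWithin_nonneg

lemma ae_abs_deriv_le_of_lipschitzOnWith_Icc {f : ℝ → ℝ} {a b : ℝ} {K : ℝ≥0}
    (hf : LipschitzOnWith K f (Icc a b)) :
    ∀ᵐ s ∂volume.restrict (Icc a b), |deriv f s| ≤ K := by
  rw [← restrict_Ioo_eq_restrict_Icc]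
  filter_upwards [ae_restrict_mem measurableSet_Ioo] with s hs
  exact norm_deriv_le_of_lipschitzOn (Icc_mem_nhds hs.1 hs.2) hf

lemma exists_forall_ae_abs_deriv_le_of_lipschitzOnWith_Icc {ι : Type*} {f : ι → ℝ → ℝ} {a b : ℝ}
    {L : ι → ℝ≥0} (hL : BddAbove (range L)) (hf : ∀ i, LipschitzOnWith (L i) (f i) (Icc a b)) :
    ∃ C : ℝ, ∀ i, ∀ᵐ s ∂volume.restrict (Icc a b), |deriv (f i) s| ≤ C := by
  obtain ⟨C, hC⟩ := hL
  exact ⟨C, fun i => ae_abs_deriv_le_of_lipschitzOnWith_Icc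
    ((hf i).weaken (hC (mem_range_self i)))⟩

lemma absContOn01_deriv_of_lipschitzOnWith {f : ℝ → ℝ} {K : ℝ≥0}
    (hf : LipschitzOnWith K f (Icc 0 1)) : AbsContOn01 f (deriv f) := by
  have hac : ∀ s ∈ Icc (0 : ℝ) 1, AbsolutelyContinuousOnInterval f 0 s := fun s hs =>
    have hsub : uIcc 0 s ⊆ Icc 0 1 := uIcc_of_le hs.1 ▸ Icc_subset_Icc_right hs.2
    (hf.mono hsub).absolutelyContinuousOnInterval
  refine ⟨(hac 1 (right_mem_Icc.2 zero_le_one)).intervalIntegrable_deriv, fun s hs => ?_⟩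
  rw [(hac s hs).integral_deriv_eq_sub, add_sub_cancel]

lemma unif_nonneg (f : ℝ → ℝ) : 0 ≤ unif f := Real.iSup_nonneg fun _ => abs_nonneg _

lemma unif_le {f : ℝ → ℝ} {C : ℝ} (h : ∀ s ∈ Icc (0 : ℝ) 1, |f s| ≤ C) : unif f ≤ C :=
  have : Nonempty (Icc (0 : ℝ) 1) := ⟨⟨0, left_mem_Icc.2 zero_le_one⟩⟩
  ciSup_le fun s => h s.1 s.2

lemma abs_le_unif {f : ℝ → ℝ} (hf : ContinuousOn f (Icc 0 1)) {s : ℝ} (hs : s ∈ Icc (0 : ℝ) 1) :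
    |f s| ≤ unif f := by
  obtain ⟨C, hC⟩ := isCompact_Icc.exists_bound_of_continuousOn hf
  exact le_ciSup (f := fun s : Icc (0 : ℝ) 1 => |f s|) ⟨C, forall_mem_range.2 fun y => hC y y.2⟩
    ⟨s, hs⟩

lemma tendsto_unif_sub_iff_tendstoUniformlyOn {ι : Type*} {p : Filter ι} {f : ι → ℝ → ℝ}
    {g : ℝ → ℝ} (hf : ∀ i, ContinuousOn (f i) (Icc 0 1)) (hg : ContinuousOn g (Icc 0 1)) :
    Tendsto (fun i => unif fun s => f i s - g s) p (𝓝 0) ↔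
      TendstoUniformlyOn f g p (Icc 0 1) := by
  rw [Metric.tendstoUniformlyOn_iff, Metric.tendsto_nhds]
  constructor <;> intro h η hη
  · filter_upwards [h η hη] with i hi s hs
    rw [Real.dist_0_eq_abs, abs_of_nonneg (unif_nonneg _)] at hi
    rw [dist_comm]
    exact (abs_le_unif ((hf i).sub hg) hs).trans_lt hi
  · filter_upwards [h (η / 2) (half_pos hη)] with i hi
    have hle : unif (fun s => f i s - g s) ≤ η / 2 := unif_le fun s hs => by
      simpa only [dist_comm, Real.dist_eq] using (hi s hs).le
    rw [Real.dist_0_eq_abs, abs_of_nonneg (unif_nonneg _)]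
    exact hle.trans_lt (half_lt_self hη)

lemma tendsto_max_unif_iff {ι : Type*} {p : Filter ι} {f g : ι → ℝ → ℝ} :
    Tendsto (fun i => max (unif (f i)) (unif (g i))) p (𝓝 0) ↔
      Tendsto (fun i => unif (f i)) p (𝓝 0) ∧ Tendsto (fun i => unif (g i)) p (𝓝 0) where
  mp h := ⟨squeeze_zero (fun _ => unif_nonneg _) (fun _ => le_max_left _ _) h,
    squeeze_zero (fun _ => unif_nonneg _) (fun _ => le_max_right _ _) h⟩
  mpr h := by simpa only [max_self] using h.1.max h.2

/-- A time change: a continuous nondecreasing map of `[0, 1]` onto itself, along which parametric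
representations are reparametrized. Values outside `[0, 1]` are arbitrary. -/
structure IsTimeChange (l : ℝ → ℝ) : Prop where
  continuousOn : ContinuousOn l (Icc 0 1)
  monotoneOn : MonotoneOn l (Icc 0 1)
  map_zero : l 0 = 0
  map_one : l 1 = 1

namespace IsTimeChange

variable {l : ℝ → ℝ}

lemma mapsTo (hl : IsTimeChange l) : MapsTo l (Icc 0 1) (Icc 0 1) := by
  simpa only [hl.map_zero, hl.map_one] using hl.monotoneOn.mapsTo_Icc

lemma surjOn (hl : IsTimeChange l) : SurjOn l (Icc 0 1) (Icc 0 1) := by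
  simpa only [SurjOn, hl.map_zero, hl.map_one] using
    intermediate_value_Icc (zero_le_one' ℝ) hl.continuousOn

lemma unif_comp (hl : IsTimeChange l) (f : ℝ → ℝ) : unif (fun s => f (l s)) = unif f :=
  (hl.mapsTo.restrict_surjective_iff.2 hl.surjOn).iSup_comp fun s : Icc (0 : ℝ) 1 => |f s|

end IsTimeChange

namespace IsParamRep

variable {T : ℝ} {x u r l : ℝ → ℝ}

lemma continuousOn (h : IsParamRep T x u r) : ContinuousOn u (Icc 0 1) := h.1

lemma continuousOn_time (h : IsParamRep T x u r) : ContinuousOn r (Icc 0 1) := h.2.1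

lemma monotoneOn_time (h : IsParamRep T x u r) : MonotoneOn r (Icc 0 1) := h.2.2.1

lemma time_zero (h : IsParamRep T x u r) : r 0 = 0 := h.2.2.2.1

lemma time_one (h : IsParamRep T x u r) : r 1 = T := h.2.2.2.2.1

lemma comp (h : IsParamRep T x u r) (hl : IsTimeChange l) :
    IsParamRep T x (u ∘ l) (r ∘ l) := by
  obtain ⟨hu, hr, hrm, hr0, hr1, hmem, hsurj, hdir⟩ := h
  refine ⟨hu.comp hl.continuousOn hl.mapsTo, hr.comp hl.continuousOn hl.mapsTo,
    hrm.comp hl.monotoneOn hl.mapsTo, by simp [hl.map_zero, hr0], by simp [hl.map_one, hr1],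
    fun s hs => hmem _ (hl.mapsTo hs), fun t ht v hv => ?_, fun s₁ hs₁ s₂ hs₂ hle =>
    hdir _ (hl.mapsTo hs₁) _ (hl.mapsTo hs₂) (hl.monotoneOn hs₁ hs₂ hle)⟩
  obtain ⟨s, hs, hrs, hus⟩ := hsurj t ht v hv
  obtain ⟨w, hw, rfl⟩ := hl.surjOn hs
  exact ⟨w, hw, hrs, hus⟩

end IsParamRep

/-- The time change `l` matches the graph of `q` with the graph of `r` along lines of slope `-δ`:
the point `(l s, q (l s))` lies on the line of slope `-δ` through `(s, r s)`. -/
structure IsObliqueTimeChange (δ : ℝ≥0) (q r l : ℝ → ℝ) : Prop extends IsTimeChange l where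
  comp_add_mul_eq : ∀ s ∈ Icc (0 : ℝ) 1, q (l s) + δ * l s = r s + δ * s

lemma exists_isObliqueTimeChange {δ : ℝ≥0} (hδ : 0 < δ) {q r : ℝ → ℝ}
    (hqc : ContinuousOn q (Icc 0 1)) (hqm : MonotoneOn q (Icc 0 1))
    (hrc : ContinuousOn r (Icc 0 1)) (hrm : MonotoneOn r (Icc 0 1))
    (hqr0 : q 0 = r 0) (hqr1 : q 1 = r 1) : ∃ l, IsObliqueTimeChange δ q r l := by
  have h0 : (0 : ℝ) ∈ Icc (0 : ℝ) 1 := left_mem_Icc.2 zero_le_one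
  have h1 : (1 : ℝ) ∈ Icc (0 : ℝ) 1 := right_mem_Icc.2 zero_le_one
  have hline : StrictMono fun s : ℝ => δ * s := strictMono_mul_left_of_pos (by exact_mod_cast hδ)
  let φ : ℝ → ℝ := fun s => q s + δ * s
  let g : ℝ → ℝ := fun s => r s + δ * s
  have hφc : ContinuousOn φ (Icc 0 1) := by fun_prop
  have hφm : StrictMonoOn φ (Icc 0 1) := hqm.add_strictMono (hline.strictMonoOn _)
  have hgc : ContinuousOn g (Icc 0 1) := by fun_prop
  have hgm : MonotoneOn g (Icc 0 1) := hrm.add (hline.monotone.monotoneOn _)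
  have hg0 : g 0 = φ 0 := by simp only [g, φ, hqr0]
  have hg1 : g 1 = φ 1 := by simp only [g, φ, hqr1]
  have hsolve : ∀ s ∈ Icc (0 : ℝ) 1, ∃ y ∈ Icc (0 : ℝ) 1, φ y = g s := fun s hs =>
    intermediate_value_Icc zero_le_one hφc (hg0 ▸ hg1 ▸ hgm.mapsTo_Icc hs)
  choose! l hl hφl using hsolve
  exact ⟨l, {
    continuousOn := continuousOn_of_comp_injOn isCompact_Icc hφc hφm.injOn hl (hgc.congr hφl)
    monotoneOn := fun a ha b hb hab => (hφm.le_iff_le (hl a ha) (hl b hb)).1 <| by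
      simpa only [hφl a ha, hφl b hb] using hgm ha hb hab
    map_zero := hφm.injOn (hl 0 h0) h0 ((hφl 0 h0).trans hg0)
    map_one := hφm.injOn (hl 1 h1) h1 ((hφl 1 h1).trans hg1)
    comp_add_mul_eq := hφl }⟩

namespace IsObliqueTimeChange

variable {δ K : ℝ≥0} {q r l : ℝ → ℝ}

lemma comp_eq (h : IsObliqueTimeChange δ q r l) {s : ℝ} (hs : s ∈ Icc (0 : ℝ) 1) :
    q (l s) = r s + δ * (s - l s) := by
  linarith [h.comp_add_mul_eq s hs]

lemma lipschitzOnWith_comp (h : IsObliqueTimeChange δ q r l) (hq : MonotoneOn q (Icc 0 1))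
    (hr : LipschitzOnWith K r (Icc 0 1)) : LipschitzOnWith (K + δ) (q ∘ l) (Icc 0 1) := by
  refine LipschitzOnWith.of_le_add_mul _ fun a ha b hb => ?_
  rcases le_total a b with hab | hba
  · have hqab : q (l a) ≤ q (l b) :=
      hq (h.mapsTo ha) (h.mapsTo hb) (h.monotoneOn ha hb hab)
    exact hqab.trans (le_add_of_nonneg_right (by positivity))
  · have hδl : δ * l b ≤ δ * l a := by gcongr; exact h.monotoneOn hb ha hba
    have hrab : r a ≤ r b + K * (a - b) := by
      simpa only [Real.dist_eq, abs_of_nonneg (sub_nonneg.2 hba)] using hr.le_add_mul ha hb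
    simp only [Function.comp_apply, h.comp_eq ha, h.comp_eq hb, Real.dist_eq,
      abs_of_nonneg (sub_nonneg.2 hba), NNReal.coe_add]
    linarith

lemma mul_abs_sub_self_le (h : IsObliqueTimeChange δ q r l) (hr : MonotoneOn r (Icc 0 1))
    {s : ℝ} (hs : s ∈ Icc (0 : ℝ) 1) : δ * |l s - s| ≤ |q (l s) - r (l s)| := by
  have hqr := h.comp_eq hs
  rcases le_total s (l s) with hsl | hls
  · have hrs := hr hs (h.mapsTo hs) hsl
    rw [abs_of_nonneg (sub_nonneg.2 hsl)]
    exact le_trans (by linarith) (neg_le_abs _)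
  · have hrs := hr (h.mapsTo hs) hs hls
    rw [abs_of_nonpos (sub_nonpos.2 hls)]
    exact le_trans (by linarith) (le_abs_self _)

lemma ae_deriv_comp_sub_deriv_eq (h : IsObliqueTimeChange δ q r l)
    (hr : MonotoneOn r (Icc 0 1)) :
    ∀ᵐ s ∂volume.restrict (Icc (0 : ℝ) 1),
      deriv (q ∘ l) s - deriv r s = δ * (1 - deriv l s) := by
  have hrd := ae_differentiableAt_of_monotoneOn_Icc hr
  have hld := ae_differentiableAt_of_monotoneOn_Icc h.monotoneOn
  rw [← restrict_Ioo_eq_restrict_Icc] at hrd hld ⊢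
  filter_upwards [hrd, hld, ae_restrict_mem measurableSet_Ioo] with s hrs hls hs
  have heq : q ∘ l =ᶠ[𝓝 s] fun w => r w + δ * (w - l w) := by
    filter_upwards [Icc_mem_nhds hs.1 hs.2] with w hw using h.comp_eq hw
  have hderiv : HasDerivAt (fun w => r w + δ * (w - l w)) (deriv r s + δ * (1 - deriv l s)) s :=
    hrs.hasDerivAt.add (((hasDerivAt_id s).sub hls.hasDerivAt).const_mul _)
  rw [heq.deriv_eq, hderiv.deriv, add_sub_cancel_left]

lemma L1norm_deriv_comp_sub_deriv_le (h : IsObliqueTimeChange δ q r l)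
    (hr : MonotoneOn r (Icc 0 1)) :
    L1norm (fun s => deriv (q ∘ l) s - deriv r s) ≤ 2 * δ := by
  have hlm : MonotoneOn l (uIcc 0 1) := by
    simpa only [uIcc_of_le (zero_le_one' ℝ)] using h.monotoneOn
  have hli : IntervalIntegrable (deriv l) volume 0 1 := hlm.intervalIntegrable_deriv
  have hl_total : ∫ s in (0 : ℝ)..1, deriv l s ≤ 1 := by
    have hmem := hlm.intervalIntegral_deriv_mem_uIcc
    rw [h.map_zero, h.map_one, sub_zero, uIcc_of_le zero_le_one] at hmem
    exact hmem.2
  have hdiff : ∀ᵐ s ∂volume.restrict (uIoc (0 : ℝ) 1),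
      |deriv (q ∘ l) s - deriv r s| = |δ * (1 - deriv l s)| := by
    rw [uIoc_of_le zero_le_one, restrict_Ioc_eq_restrict_Icc]
    filter_upwards [h.ae_deriv_comp_sub_deriv_eq hr] with s hs using congrArg _ hs
  calc L1norm (fun s => deriv (q ∘ l) s - deriv r s)
      = ∫ s in (0 : ℝ)..1, |δ * (1 - deriv l s)| :=
        intervalIntegral.integral_congr_ae_restrict hdiff
    _ ≤ ∫ s in (0 : ℝ)..1, δ * (1 + deriv l s) := by
        refine intervalIntegral.integral_mono_ae_restrict zero_le_one
          ((intervalIntegrable_const.sub hli).const_mul _).abs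
          ((intervalIntegrable_const.add hli).const_mul _) ?_
        filter_upwards [ae_deriv_nonneg_of_monotoneOn_Icc h.monotoneOn] with s hs
        rw [abs_mul, abs_of_nonneg δ.coe_nonneg]
        gcongr
        exact abs_le.2 ⟨by linarith, by linarith⟩
    _ = δ * (1 + ∫ s in (0 : ℝ)..1, deriv l s) := by
        rw [intervalIntegral.integral_const_mul,
          intervalIntegral.integral_add intervalIntegrable_const hli,
          intervalIntegral.integral_const, sub_zero, one_smul]
    _ ≤ δ * (1 + 1) := by gcongr
    _ = 2 * δ := by ring

end IsObliqueTimeChange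

lemma IsParamRep.exists_isTimeChange_lipschitzOnWith_comp {T : ℝ} {x u r : ℝ → ℝ}
    (h : IsParamRep T x u r) :
    ∃ K k, IsTimeChange k ∧ LipschitzOnWith K (r ∘ k) (Icc 0 1) := by
  have hT : 0 ≤ T := by
    rw [← h.time_zero, ← h.time_one]
    exact h.monotoneOn_time (left_mem_Icc.2 zero_le_one) (right_mem_Icc.2 zero_le_one) zero_le_one
  obtain ⟨k, hk⟩ := exists_isObliqueTimeChange (δ := 1) (r := fun s => T * s) one_pos
    h.continuousOn_time h.monotoneOn_time (by fun_prop)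
    ((monotone_mul_left_of_nonneg hT).monotoneOn _) (by simp [h.time_zero]) (by simp [h.time_one])
  exact ⟨_, k, hk.toIsTimeChange,
    hk.lipschitzOnWith_comp h.monotoneOn_time (lipschitzWith_smul T).lipschitzOnWith⟩

lemma exists_seq_isObliqueTimeChange {q : ℕ → ℝ → ℝ} {r : ℝ → ℝ}
    (hqc : ∀ n, ContinuousOn (q n) (Icc 0 1)) (hqm : ∀ n, MonotoneOn (q n) (Icc 0 1))
    (hrc : ContinuousOn r (Icc 0 1)) (hrm : MonotoneOn r (Icc 0 1))
    (hqr0 : ∀ n, q n 0 = r 0) (hqr1 : ∀ n, q n 1 = r 1)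
    (hqr : Tendsto (fun n => unif fun s => q n s - r s) atTop (𝓝 0)) :
    ∃ (δ : ℕ → ℝ≥0) (l : ℕ → ℝ → ℝ), Tendsto δ atTop (𝓝 0) ∧
      (∀ n, IsObliqueTimeChange (δ n) (q n) r (l n)) ∧
      TendstoUniformlyOn l id atTop (Icc 0 1) := by
  obtain ⟨δ, hδpos, hδ, hδsq⟩ := exists_pos_tendsto_zero_le_sq hqr
  choose l hl using fun n =>
    exists_isObliqueTimeChange (hδpos n) (hqc n) (hqm n) hrc hrm (hqr0 n) (hqr1 n)
  refine ⟨δ, l, hδ, hl, Metric.tendstoUniformlyOn_iff.2 fun η hη => ?_⟩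
  filter_upwards [(NNReal.tendsto_coe.2 hδ).eventually_lt_const hη] with n hn s hs
  have hmul : δ n * |l n s - s| ≤ δ n * δ n :=
    calc δ n * |l n s - s| ≤ |q n (l n s) - r (l n s)| := (hl n).mul_abs_sub_self_le hrm hs
      _ ≤ unif fun s => q n s - r s := abs_le_unif ((hqc n).sub hrc) ((hl n).mapsTo hs)
      _ ≤ δ n * δ n := (hδsq n).trans_eq (sq _)
  rw [dist_comm, id, Real.dist_eq]
  exact (le_of_mul_le_mul_left hmul (hδpos n)).trans_lt hn

lemma tendsto_L1norm_deriv_comp_sub_deriv {ι : Type*} {p : Filter ι} {δ : ι → ℝ≥0}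
    {q l : ι → ℝ → ℝ} {r : ℝ → ℝ} (hl : ∀ i, IsObliqueTimeChange (δ i) (q i) r (l i))
    (hr : MonotoneOn r (Icc 0 1)) (hδ : Tendsto δ p (𝓝 0)) :
    Tendsto (fun i => L1norm fun s => deriv (q i ∘ l i) s - deriv r s) p (𝓝 0) := by
  refine squeeze_zero (fun i => ?_) (fun i => (hl i).L1norm_deriv_comp_sub_deriv_le hr) ?_
  · exact intervalIntegral.integral_nonneg zero_le_one fun _ _ => abs_nonneg _
  · simpa only [NNReal.coe_zero, mul_zero] using (NNReal.tendsto_coe.2 hδ).const_mul 2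

lemma tendsto_unif_comp_sub {ι : Type*} {p : Filter ι} {f l : ι → ℝ → ℝ} {g : ℝ → ℝ}
    (hf : ∀ i, ContinuousOn (f i) (Icc 0 1)) (hg : ContinuousOn g (Icc 0 1))
    (hl : ∀ i, IsTimeChange (l i)) (hlid : TendstoUniformlyOn l id p (Icc 0 1))
    (hfg : Tendsto (fun i => unif fun s => f i s - g s) p (𝓝 0)) :
    Tendsto (fun i => unif fun s => f i (l i s) - g s) p (𝓝 0) := by
  rw [tendsto_unif_sub_iff_tendstoUniformlyOn hf hg] at hfg
  refine (tendsto_unif_sub_iff_tendstoUniformlyOn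
    (fun i => (hf i).comp (hl i).continuousOn (hl i).mapsTo) hg).2 ?_
  exact tendstoUniformlyOn_comp_of_uniformContinuousOn hfg
    (isCompact_Icc.uniformContinuousOn_of_continuous hg) hlid (fun i => (hl i).mapsTo) (mapsTo_id _)

/-- Theorem 1.2: time functions in the parametric representations can be chosen
absolutely continuous with uniformly bounded derivatives converging in `L₁`. -/
theorem time_functions_in_parametric_representations
    (T : ℝ) (hT : 0 < T)
    (x : ℕ → ℝ → ℝ) (x₀ : ℝ → ℝ)
    (hxc : ∀ n, IsCadlagOn T (x n)) (hx₀c : IsCadlagOn T x₀)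
    (u0 r0 : ℝ → ℝ) (un rn : ℕ → ℝ → ℝ)
    (h0 : IsParamRep T x₀ u0 r0) (hn : ∀ n, IsParamRep T (x n) (un n) (rn n))
    (hconv : Filter.Tendsto
      (fun n => max (unif fun s => un n s - u0 s) (unif fun s => rn n s - r0 s))
      Filter.atTop (nhds 0)) :
    ∃ (u r : ℝ → ℝ) (uu rr : ℕ → ℝ → ℝ) (r' : ℝ → ℝ) (rr' : ℕ → ℝ → ℝ),
      IsParamRep T x₀ u r ∧ (∀ n, IsParamRep T (x n) (uu n) (rr n)) ∧
      Filter.Tendsto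
        (fun n => max (unif fun s => uu n s - u s) (unif fun s => rr n s - r s))
        Filter.atTop (nhds 0) ∧
      AbsContOn01 r r' ∧ (∀ n, AbsContOn01 (rr n) (rr' n)) ∧
      Filter.Tendsto (fun n => L1norm fun s => rr' n s - r' s) Filter.atTop (nhds 0) ∧
      (∃ C : ℝ, ∀ᵐ s ∂(MeasureTheory.volume.restrict (Set.Icc (0:ℝ) 1)), |r' s| ≤ C) ∧
      (∃ C : ℝ, ∀ n, ∀ᵐ s ∂(MeasureTheory.volume.restrict (Set.Icc (0:ℝ) 1)),
        |rr' n s| ≤ C) := by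
  obtain ⟨K, k, hk, hrK⟩ := h0.exists_isTimeChange_lipschitzOnWith_comp
  have hU := h0.comp hk
  have hV n := (hn n).comp hk
  obtain ⟨hconv_u, hconv_r⟩ := tendsto_max_unif_iff.1 <| hconv.congr fun n =>
    congrArg₂ max (hk.unif_comp _).symm (hk.unif_comp _).symm
  obtain ⟨δ, l, hδ, hl, hlid⟩ := exists_seq_isObliqueTimeChange
    (fun n => (hV n).continuousOn_time) (fun n => (hV n).monotoneOn_time)
    hU.continuousOn_time hU.monotoneOn_time
    (fun n => (hV n).time_zero.trans hU.time_zero.symm)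
    (fun n => (hV n).time_one.trans hU.time_one.symm) hconv_r
  have hl_tc n : IsTimeChange (l n) := (hl n).toIsTimeChange
  have hlip n := (hl n).lipschitzOnWith_comp (hV n).monotoneOn_time hrK
  have hlim_u := tendsto_unif_comp_sub (fun n => (hV n).continuousOn) hU.continuousOn
    hl_tc hlid hconv_u
  have hlim_r := tendsto_unif_comp_sub (fun n => (hV n).continuousOn_time) hU.continuousOn_time
    hl_tc hlid hconv_r
  exact ⟨u0 ∘ k, r0 ∘ k, fun n => (un n ∘ k) ∘ l n, fun n => (rn n ∘ k) ∘ l n, _, fun n => _,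
    hU, fun n => (hV n).comp (hl_tc n), tendsto_max_unif_iff.2 ⟨hlim_u, hlim_r⟩,
    absContOn01_deriv_of_lipschitzOnWith hrK,
    fun n => absContOn01_deriv_of_lipschitzOnWith (hlip n),
    tendsto_L1norm_deriv_comp_sub_deriv hl hU.monotoneOn_time hδ,
    ⟨K, ae_abs_deriv_le_of_lipschitzOnWith_Icc hrK⟩,
    exists_forall_ae_abs_deriv_le_of_lipschitzOnWith_Icc (hδ.const_add K).bddAbove_range hlip⟩
end

section
/- Let T > 0 and let x be any càdlàg function on [0,T]. Then there exists a parametric representation (u, r) ∈ Π(x) such that r is absolutely continuous with respect to Lebesgue measure on [0,1], with derivative r′ satisfying 0 ≤ r′(s) ≤ 2T for almost every s ∈ [0,1]. (Lemma 4.3, choice of r in the parametric representation of x.) -/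
open Set Filter MeasureTheory Topology

/-! A parametric representation of `x` must linger at every jump time `t` of `x` long enough for
`u` to run through the jump. As `x` has only countably many jumps, there is a probability measure
`ν` on `[0, T]` charging each of them, and `f t = t / (2T) + ν (-∞, t] / 2` maps `[0, T]` into
`[0, 1]`, opening up the interval `[f (t-), f t]` at each jump. Its generalized inverse is `r`, and
`u` interpolates linearly between `x (t-)` and `x t` on `[f (t-), f t]`. Since `f` grows at least
with slope `1 / (2T)`, its inverse is `2T`-Lipschitz, so it is absolutely continuous with
`0 ≤ r' ≤ 2T`. -/

open Function ProbabilityTheory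
open scoped NNReal

section Topology

variable {α β : Type*} [TopologicalSpace α] [TopologicalSpace β]

lemma tendsto_of_mapClusterPt_of_isOpen [RegularSpace β] {f g : α → β} {s : Set α} {a : α} {b : β}
    (hs : IsOpen s) (hf : Tendsto f (𝓝[s] a) (𝓝 b)) (hg : ∀ c ∈ s, MapClusterPt (g c) (𝓝 c) f) :
    Tendsto g (𝓝[s] a) (𝓝 b) := by
  refine (closed_nhds_basis b).tendsto_right_iff.2 fun t ⟨ht, ht_closed⟩ => ?_
  filter_upwards [self_mem_nhdsWithin, eventually_eventually_nhdsWithin.2 (hf ht)] with c hc h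
  rw [hs.nhdsWithin_eq hc] at h
  exact ht_closed.mem_of_mapClusterPt (hg c hc) h

lemma tendsto_of_mem_segment {E ι : Type*} [AddCommGroup E] [Module ℝ E] [TopologicalSpace E]
    [LocallyConvexSpace ℝ E] {l : Filter ι} {a b c : ι → E} {y : E} (ha : Tendsto a l (𝓝 y))
    (hb : Tendsto b l (𝓝 y)) (hc : ∀ i, c i ∈ segment ℝ (a i) (b i)) : Tendsto c l (𝓝 y) := by
  refine (LocallyConvexSpace.convex_basis (𝕜 := ℝ) y).tendsto_right_iff.2
    fun s ⟨hs, hs_convex⟩ => ?_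
  filter_upwards [ha hs, hb hs] with i hai hbi using hs_convex.segment_subset hai hbi (hc i)

lemma continuousOn_Icc_of_left_right [LinearOrder α] [OrderTopology α] {g : α → β} {a b : α}
    (hl : ∀ t ∈ Ioc a b, ContinuousWithinAt g (Iic t) t)
    (hr : ∀ t ∈ Ico a b, ContinuousWithinAt g (Ici t) t) : ContinuousOn g (Icc a b) := by
  intro t ht
  rw [← Icc_union_Icc_eq_Icc ht.1 ht.2]
  refine ContinuousWithinAt.union ?_ ?_
  · rcases ht.1.eq_or_lt with rfl | hat
    · simp [continuousWithinAt_singleton]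
    · exact (hl t ⟨hat, ht.2⟩).mono Icc_subset_Iic_self
  · rcases ht.2.eq_or_lt with rfl | htb
    · simp [continuousWithinAt_singleton]
    · exact (hr t ⟨ht.1, htb⟩).mono Icc_subset_Ici_self

/-- For disjoint open `U ∋ y` and `V ∋ f t`, the points `t` of `f ⁻¹' V` near which `f` takes values
in `U` on the left are isolated from the left in `f ⁻¹' V`, and countably many `V` suffice. -/
lemma countable_setOf_tendsto_nhdsLT_ne [LinearOrder α] [OrderTopology α]
    [SecondCountableTopology α] [SecondCountableTopology β] [T2Space β] (f : α → β) :
    {t | ∃ y ≠ f t, Tendsto f (𝓝[<] t) (𝓝 y)}.Countable := by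
  have hB := TopologicalSpace.isBasis_countableBasis β
  have hBc := TopologicalSpace.countable_countableBasis β
  refine (hBc.biUnion fun V _ =>
    countable_setOfPred_isolated_left_within (s := f ⁻¹' V)).mono ?_
  rintro t ⟨y, hne, hy⟩
  obtain ⟨U, V, hU, hV, hyU, htV, hUV⟩ := t2_separation hne
  obtain ⟨W, hW, htW, hWV⟩ := hB.exists_subset_of_mem_open htV hV
  refine mem_biUnion hW ⟨htW, ?_⟩
  have hdisj : ∀ᶠ _ in 𝓝[f ⁻¹' W ∩ Iio t] t, False := by
    filter_upwards [self_mem_nhdsWithin,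
      nhdsWithin_mono t inter_subset_right (hy (hU.mem_nhds hyU))] with s hs hsU
    exact hUV.notMem_of_mem_left hsU (hWV hs.1)
  simpa using hdisj

end Topology

section Atoms

variable {α : Type*} [MeasurableSpace α]

lemma exists_isProbabilityMeasure_singleton_ne_zero [MeasurableSingletonClass α] {D : Set α}
    (hD : D.Countable) (hne : D.Nonempty) :
    ∃ ν : Measure α, IsProbabilityMeasure ν ∧ ν Dᶜ = 0 ∧ ∀ d ∈ D, ν {d} ≠ 0 := by
  have := hD.to_subtype
  let μ : Measure α := (Measure.count : Measure D).map (↑)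
  have hμ {s : Set α} (hs : MeasurableSet s) : μ s = Measure.count ((↑) ⁻¹' s : Set D) :=
    Measure.map_apply measurable_subtype_coe hs
  have hμ_pos {d : α} (hd : d ∈ D) : μ {d} ≠ 0 := by
    rw [hμ (measurableSet_singleton d), Measure.count_ne_zero_iff]
    exact ⟨⟨d, hd⟩, rfl⟩
  obtain ⟨d, hd⟩ := hne
  have : NeZero μ := ⟨fun h => hμ_pos hd (by simp [h])⟩
  refine ⟨μ.toFinite, inferInstance, toFinite_absolutelyContinuous μ ?_,
    fun d hd h => hμ_pos hd (absolutelyContinuous_toFinite μ h)⟩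
  simp [hμ hD.measurableSet.compl]

variable {ν : Measure ℝ} [IsProbabilityMeasure ν] {a : ℝ}

lemma cdf_eq_one_of_measure_Ioi (h : ν (Ioi a) = 0) : cdf ν a = 1 := by
  rw [cdf_eq_real, measureReal_def, (prob_compl_eq_zero_iff measurableSet_Iic).1 (by simpa)]
  simp

lemma leftLim_cdf_eq_zero_of_measure_Iio (h : ν (Iio a) = 0) : leftLim (cdf ν) a = 0 := by
  rw [← measure_cdf ν, StieltjesFunction.measure_Iio _ (tendsto_cdf_atBot ν)] at h
  have h_nonneg : 0 ≤ leftLim (cdf ν) a :=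
    (cdf_nonneg ν (a - 1)).trans ((monotone_cdf ν).le_leftLim (by simp))
  simpa using h_nonneg.antisymm' (by simpa using h)

lemma leftLim_cdf_lt (h : ν {a} ≠ 0) : leftLim (cdf ν) a < cdf ν a := by
  rw [← measure_cdf ν, StieltjesFunction.measure_singleton] at h
  simpa using h

end Atoms

section GeneralizedInverse

lemma exists_galoisConnection_stieltjesFunction {R : Type*} [ConditionallyCompleteLinearOrder R]
    [Nonempty R] [TopologicalSpace R] [OrderTopology R] (f : StieltjesFunction R)
    (htop : Tendsto f atTop atTop) (hbot : Tendsto f atBot atBot) :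
    ∃ r : ℝ → R, GaloisConnection r f := by
  refine ⟨fun s => sInf {t | s ≤ f t}, fun s t => ⟨fun hst => ?_, fun hst => ?_⟩⟩
  all_goals
    obtain ⟨b, hb⟩ := (hbot.eventually_lt_atBot s).exists
    have hbdd : BddBelow {t | s ≤ f t} := ⟨b, fun t ht => (f.mono.reflect_lt (hb.trans_le ht)).le⟩
  · have hne : {t | s ≤ f t}.Nonempty := (htop.eventually_ge_atTop s).exists
    have := mem_closure_iff_nhdsWithin_neBot.1 (csInf_mem_closure hne hbdd)
    have hlim := (f.right_continuous (sInf {t | s ≤ f t})).mono fun t ht => csInf_le hbdd ht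
    exact (ge_of_tendsto hlim self_mem_nhdsWithin).trans (f.mono hst)
  · exact csInf_le hbdd hst

variable {f r : ℝ → ℝ} {s t : ℝ}

lemma leftLim_le_of_galoisConnection (hr : GaloisConnection r f) (s : ℝ) :
    leftLim f (r s) ≤ s :=
  le_of_tendsto (hr.monotone_u.tendsto_leftLim _)
    (eventually_nhdsWithin_of_forall fun _ ht => (hr.lt_iff_lt.1 ht).le)

lemma eq_iff_mem_Icc_of_galoisConnection (hf : StrictMono f) (hr : GaloisConnection r f) :
    r s = t ↔ s ∈ Icc (leftLim f t) (f t) := by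
  refine ⟨?_, fun hs => ((hr s t).2 hs.2).antisymm (not_lt.1 fun hlt => ?_)⟩
  · rintro rfl
    exact ⟨leftLim_le_of_galoisConnection hr s, hr.le_u_l s⟩
  · obtain ⟨q, hrq, hqt⟩ := exists_between hlt
    exact lt_irrefl s <| calc
      s ≤ f (r s) := hr.le_u_l s
      _ < f q := hf hrq
      _ ≤ leftLim f t := hf.monotone.le_leftLim hqt
      _ ≤ s := hs.1

lemma continuous_of_galoisConnection (hf : StrictMono f) (hr : GaloisConnection r f) :
    Continuous r :=
  hr.monotone_l.continuous_of_surjective fun t =>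
    ⟨f t, (eq_iff_mem_Icc_of_galoisConnection hf hr).2 ⟨hf.monotone.leftLim_le le_rfl, le_rfl⟩⟩

lemma tendsto_nhdsLT_of_galoisConnection (hf : StrictMono f) (hr : GaloisConnection r f)
    (hs : leftLim f (r s) = s) : Tendsto r (𝓝[<] s) (𝓝[<] r s) := by
  refine tendsto_nhdsWithin_iff.2
    ⟨(continuous_of_galoisConnection hf hr).continuousWithinAt, ?_⟩
  filter_upwards [self_mem_nhdsWithin] with q (hq : q < s)
  refine (hr.monotone_l hq.le).lt_of_ne fun h => hq.not_ge ?_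
  exact hs ▸ ((eq_iff_mem_Icc_of_galoisConnection hf hr).1 h).1

lemma tendsto_nhdsGT_of_galoisConnection (hf : StrictMono f) (hr : GaloisConnection r f)
    (hs : f (r s) = s) : Tendsto r (𝓝[>] s) (𝓝[>] r s) := by
  refine tendsto_nhdsWithin_iff.2
    ⟨(continuous_of_galoisConnection hf hr).continuousWithinAt, ?_⟩
  filter_upwards [self_mem_nhdsWithin] with q (hq : s < q)
  exact hr.lt_iff_lt.2 (hs.trans_lt hq)

lemma lipschitzWith_of_galoisConnection {K : ℝ≥0} (hK : AntilipschitzWith K f)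
    (hr : GaloisConnection r f) : LipschitzWith K r := by
  refine LipschitzWith.of_le_add_mul K fun s s' => (hr s _).2 ?_
  set t := r s' + K * dist s s'
  have ht : r s' ≤ t := le_add_of_nonneg_right (by positivity)
  have hK_pos : 0 < (K : ℝ) := by
    have := hK.le_mul_dist 0 1
    contrapose! this
    simp [le_antisymm this K.2]
  have hdist : K * dist s s' ≤ K * (f t - f (r s')) := by
    have := hK.le_mul_dist t (r s')
    rwa [Real.dist_eq, Real.dist_eq, abs_of_nonneg (sub_nonneg.2 ht),
      abs_of_nonneg (sub_nonneg.2 (hr.monotone_u ht)), add_sub_cancel_left] at this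
  have := le_of_mul_le_mul_left hdist hK_pos
  linarith [le_abs_self (s - s'), Real.dist_eq s s', hr.le_u_l s']

end GeneralizedInverse

section LeftLimit

variable {T t : ℝ} {x : ℝ → ℝ}

lemma mapClusterPt_leftL (x : ℝ → ℝ) (t : ℝ) : MapClusterPt (leftL x t) (𝓝 t) x := by
  rw [leftL]
  split_ifs with h
  · subst h
    exact (tendsto_pure_nhds x 0).mapClusterPt.mono (pure_le_nhds 0)
  · exact (mapClusterPt_leftLim x t).mono nhdsWithin_le_nhds

lemma tendsto_nhdsLT_leftL (hx : IsCadlagOn T x) (ht : t ∈ Ioc 0 T) :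
    Tendsto x (𝓝[<] t) (𝓝 (leftL x t)) := by
  rw [leftL, if_neg ht.1.ne']
  exact tendsto_leftLim_of_tendsto (hx.2 t ht)

lemma countable_setOf_leftL_ne (hx : IsCadlagOn T x) :
    {t | t ∈ Icc 0 T ∧ leftL x t ≠ x t}.Countable := by
  refine (countable_setOf_tendsto_nhdsLT_ne x).mono ?_
  rintro t ⟨ht, hne⟩
  have ht0 : 0 ≠ t := by
    rintro rfl
    simp [leftL] at hne
  exact ⟨leftL x t, hne, tendsto_nhdsLT_leftL hx ⟨ht.1.lt_of_ne ht0, ht.2⟩⟩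

end LeftLimit

section JumpInterpolation

/-- The spatial component over the time component `r`: on the interval `[f (t-), f t]` of parameters
`s` with `r s = t`, it runs linearly from `x (t-)` to `x t`. When this interval is a point, the
quotient is the junk value `0 / 0 = 0`, which is harmless if `f` jumps wherever `x` does. -/
noncomputable def jumpInterpolation (x : ℝ → ℝ) (f : StieltjesFunction ℝ) (r : ℝ → ℝ) (s : ℝ) : ℝ :=
  AffineMap.lineMap (leftL x (r s)) (x (r s))
    ((s - leftLim f (r s)) / (f (r s) - leftLim f (r s)))

variable {x : ℝ → ℝ} {f : StieltjesFunction ℝ} {r : ℝ → ℝ}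

lemma jumpInterpolation_mem_segment (hr : GaloisConnection r f) (s : ℝ) :
    jumpInterpolation x f r s ∈ segment ℝ (leftL x (r s)) (x (r s)) := by
  have hs : leftLim f (r s) ≤ s ∧ s ≤ f (r s) :=
    ⟨leftLim_le_of_galoisConnection hr s, hr.le_u_l s⟩
  rw [segment_eq_image_lineMap]
  exact mem_image_of_mem _ ⟨div_nonneg (by linarith) (by linarith),
    div_le_one_of_le₀ (by linarith) (by linarith)⟩

lemma jumpInterpolation_eq_leftL {s : ℝ} (hs : leftLim f (r s) = s) :
    jumpInterpolation x f r s = leftL x (r s) := by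
  simp [jumpInterpolation, hs]

lemma tendsto_jumpInterpolation (hr : GaloisConnection r f) {l : Filter ℝ} {s : Set ℝ} {t y : ℝ}
    (hs : IsOpen s) (hx : Tendsto x (𝓝[s] t) (𝓝 y)) (hrl : Tendsto r l (𝓝[s] t)) :
    Tendsto (jumpInterpolation x f r) l (𝓝 y) :=
  have hx_left : Tendsto (leftL x) (𝓝[s] t) (𝓝 y) :=
    tendsto_of_mapClusterPt_of_isOpen hs hx fun q _ => mapClusterPt_leftL x q
  tendsto_of_mem_segment (hx_left.comp hrl) (hx.comp hrl) (jumpInterpolation_mem_segment hr)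

lemma jumpInterpolation_sub_mul_nonneg {s₁ s₂ : ℝ} (hs : s₁ ≤ s₂) (hrs : r s₁ = r s₂) :
    0 ≤ (jumpInterpolation x f r s₂ - jumpInterpolation x f r s₁) *
      (x (r s₁) - leftL x (r s₁)) := by
  have hf : leftLim f (r s₁) ≤ f (r s₁) := f.mono.leftLim_le le_rfl
  calc 0 ≤ (s₂ - s₁) / (f (r s₁) - leftLim f (r s₁)) * (x (r s₁) - leftL x (r s₁)) ^ 2 :=
        mul_nonneg (div_nonneg (sub_nonneg.2 hs) (sub_nonneg.2 hf)) (sq_nonneg _)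
    _ = _ := by
      simp only [jumpInterpolation, ← hrs, AffineMap.lineMap_apply_ring']
      ring

end JumpInterpolation

/-- `f` rescales `[0, T]` to `[0, 1]` and jumps wherever the path `x` jumps, so that the intervals
`[f (t-), f t]` leave room to run through the jumps of `x`. -/
structure IsJumpTimeChange (T : ℝ) (x : ℝ → ℝ) (f : StieltjesFunction ℝ) : Prop where
  strictMono : StrictMono f
  leftLim_zero : leftLim f 0 = 0
  apply_right : f T = 1
  leftL_eq : ∀ t ∈ Icc 0 T, leftLim f t = f t → leftL x t = x t

namespace IsJumpTimeChange

variable {T : ℝ} {x : ℝ → ℝ} {f : StieltjesFunction ℝ} {r : ℝ → ℝ}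

lemma Icc_subset (hf : IsJumpTimeChange T x f) {t : ℝ} (ht : t ∈ Icc 0 T) :
    Icc (leftLim f t) (f t) ⊆ Icc 0 1 :=
  Icc_subset_Icc (hf.leftLim_zero ▸ f.mono.leftLim ht.1) (hf.apply_right ▸ f.mono ht.2)

lemma inverse_eq_iff (hf : IsJumpTimeChange T x f) (hr : GaloisConnection r f) {s t : ℝ} :
    r s = t ↔ s ∈ Icc (leftLim f t) (f t) :=
  eq_iff_mem_Icc_of_galoisConnection hf.strictMono hr

lemma inverse_zero (hf : IsJumpTimeChange T x f) (hr : GaloisConnection r f) : r 0 = 0 :=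
  (hf.inverse_eq_iff hr).2 ⟨hf.leftLim_zero.le, hf.leftLim_zero.ge.trans (f.mono.leftLim_le le_rfl)⟩

lemma inverse_one (hf : IsJumpTimeChange T x f) (hr : GaloisConnection r f) : r 1 = T :=
  (hf.inverse_eq_iff hr).2 ⟨hf.apply_right ▸ f.mono.leftLim_le le_rfl, hf.apply_right.ge⟩

lemma inverse_mem_Icc (hf : IsJumpTimeChange T x f) (hr : GaloisConnection r f) {s : ℝ}
    (hs : s ∈ Icc 0 1) : r s ∈ Icc 0 T :=
  ⟨hf.inverse_zero hr ▸ hr.monotone_l hs.1, hf.inverse_one hr ▸ hr.monotone_l hs.2⟩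

lemma jumpInterpolation_lineMap (hf : IsJumpTimeChange T x f) {t θ : ℝ} (ht : t ∈ Icc 0 T)
    (hrt : r (AffineMap.lineMap (leftLim f t) (f t) θ) = t) :
    jumpInterpolation x f r (AffineMap.lineMap (leftLim f t) (f t) θ) =
      AffineMap.lineMap (leftL x t) (x t) θ := by
  rw [jumpInterpolation, hrt]
  by_cases h : leftLim f t = f t
  · simp only [hf.leftL_eq t ht h, AffineMap.lineMap_same_apply]
  · simp only [AffineMap.lineMap_apply_ring', add_sub_cancel_right,
      mul_div_cancel_right₀ _ (sub_ne_zero.2 (Ne.symm h))]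

lemma continuousOn_jumpInterpolation_Icc (hf : IsJumpTimeChange T x f) (hr : GaloisConnection r f)
    (t : ℝ) : ContinuousOn (jumpInterpolation x f r) (Icc (leftLim f t) (f t)) := by
  refine ContinuousOn.congr (f := fun s => AffineMap.lineMap (leftL x t) (x t)
    ((s - leftLim f t) / (f t - leftLim f t))) ?_ fun s hs => ?_
  · simp only [AffineMap.lineMap_apply_module]
    fun_prop
  · rw [jumpInterpolation, (hf.inverse_eq_iff hr).2 hs]

lemma jumpInterpolation_eq_right (hf : IsJumpTimeChange T x f) {s : ℝ} (hrs : r s ∈ Icc 0 T)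
    (hs : f (r s) = s) : jumpInterpolation x f r s = x (r s) := by
  by_cases h : leftLim f (r s) = f (r s)
  · simp [jumpInterpolation, hf.leftL_eq _ hrs h]
  · have h_ne : f (r s) - leftLim f (r s) ≠ 0 := sub_ne_zero.2 (Ne.symm h)
    rw [hs] at h_ne
    simp [jumpInterpolation, hs, div_self h_ne]

lemma continuousWithinAt_Iic_jumpInterpolation (hx : IsCadlagOn T x) (hf : IsJumpTimeChange T x f)
    (hr : GaloisConnection r f) {s : ℝ} (hs : s ∈ Ioc 0 1) :
    ContinuousWithinAt (jumpInterpolation x f r) (Iic s) s := by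
  have h_right := hr.le_u_l s
  rcases (leftLim_le_of_galoisConnection hr s).lt_or_eq with h_left | h_left
  · exact (hf.continuousOn_jumpInterpolation_Icc hr (r s) s ⟨h_left.le, h_right⟩)
      |>.mono_of_mem_nhdsWithin (Icc_mem_nhdsLE_of_mem ⟨h_left, h_right⟩)
  · have hrs := hf.inverse_mem_Icc hr (Ioc_subset_Icc_self hs)
    have hrs0 : 0 ≠ r s := by
      intro h
      rw [← h, hf.leftLim_zero] at h_left
      exact hs.1.ne h_left
    rw [← continuousWithinAt_Iio_iff_Iic, ContinuousWithinAt, jumpInterpolation_eq_leftL h_left]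
    exact tendsto_jumpInterpolation hr isOpen_Iio
      (tendsto_nhdsLT_leftL hx ⟨hrs.1.lt_of_ne hrs0, hrs.2⟩)
      (tendsto_nhdsLT_of_galoisConnection hf.strictMono hr h_left)

lemma continuousWithinAt_Ici_jumpInterpolation (hx : IsCadlagOn T x) (hf : IsJumpTimeChange T x f)
    (hr : GaloisConnection r f) {s : ℝ} (hs : s ∈ Ico 0 1) :
    ContinuousWithinAt (jumpInterpolation x f r) (Ici s) s := by
  have h_left := leftLim_le_of_galoisConnection hr s
  rcases (hr.le_u_l s).lt_or_eq with h_right | h_right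
  · exact (hf.continuousOn_jumpInterpolation_Icc hr (r s) s ⟨h_left, h_right.le⟩)
      |>.mono_of_mem_nhdsWithin (Icc_mem_nhdsGE_of_mem ⟨h_left, h_right⟩)
  · have hrs := hf.inverse_mem_Icc hr (Ico_subset_Icc_self hs)
    have hrsT : r s ≠ T := by
      intro h
      rw [h, hf.apply_right] at h_right
      exact hs.2.ne h_right
    have hx_right := hx.1 _ ⟨hrs.1, hrs.2.lt_of_ne hrsT⟩
    rw [← continuousWithinAt_Ioi_iff_Ici, ContinuousWithinAt,
      hf.jumpInterpolation_eq_right hrs h_right.symm]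
    exact tendsto_jumpInterpolation hr isOpen_Ioi
      (hx_right.mono_left (nhdsWithin_mono _ Ioi_subset_Ici_self))
      (tendsto_nhdsGT_of_galoisConnection hf.strictMono hr h_right.symm)

lemma exists_jumpInterpolation_eq (hf : IsJumpTimeChange T x f) (hr : GaloisConnection r f)
    {t v : ℝ} (ht : t ∈ Icc 0 T) (hv : v ∈ segment ℝ (leftL x t) (x t)) :
    ∃ s ∈ Icc (0 : ℝ) 1, r s = t ∧ jumpInterpolation x f r s = v := by
  rw [segment_eq_image_lineMap] at hv
  obtain ⟨θ, hθ, rfl⟩ := hv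
  have hs : AffineMap.lineMap (leftLim f t) (f t) θ ∈ Icc (leftLim f t) (f t) := by
    rw [← segment_eq_Icc (f.mono.leftLim_le le_rfl), segment_eq_image_lineMap]
    exact mem_image_of_mem _ hθ
  have hrt := (hf.inverse_eq_iff hr).2 hs
  exact ⟨_, hf.Icc_subset ht hs, hrt, hf.jumpInterpolation_lineMap ht hrt⟩

lemma isParamRep (hx : IsCadlagOn T x) (hf : IsJumpTimeChange T x f)
    (hr : GaloisConnection r f) : IsParamRep T x (jumpInterpolation x f r) r :=
  ⟨continuousOn_Icc_of_left_right
      (fun _ => hf.continuousWithinAt_Iic_jumpInterpolation hx hr)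
      fun _ => hf.continuousWithinAt_Ici_jumpInterpolation hx hr,
    (continuous_of_galoisConnection hf.strictMono hr).continuousOn, hr.monotone_l.monotoneOn _,
    hf.inverse_zero hr, hf.inverse_one hr, fun s _ => jumpInterpolation_mem_segment hr s,
    fun _ ht _ hv => hf.exists_jumpInterpolation_eq hr ht hv,
    fun _ _ _ _ => jumpInterpolation_sub_mul_nonneg⟩

end IsJumpTimeChange

section TimeChange

/-- Time change spending half of the parameter range uniformly over `[0, T]` and the other half
according to `ν`. -/
noncomputable def timeChange (T : ℝ≥0) (ν : Measure ℝ) : StieltjesFunction ℝ :=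
  (2 * T)⁻¹ • StieltjesFunction.id + (2⁻¹ : ℝ≥0) • cdf ν

variable {T : ℝ≥0} {ν : Measure ℝ}

lemma timeChange_apply (T : ℝ≥0) (ν : Measure ℝ) (t : ℝ) :
    timeChange T ν t = (2 * (T : ℝ))⁻¹ * t + 2⁻¹ * cdf ν t := by
  change ((2 * T)⁻¹ : ℝ≥0) * t + (2⁻¹ : ℝ≥0) * cdf ν t = _
  push_cast
  rfl

lemma leftLim_timeChange (T : ℝ≥0) (ν : Measure ℝ) (t : ℝ) :
    leftLim (timeChange T ν) t = (2 * (T : ℝ))⁻¹ * t + 2⁻¹ * leftLim (cdf ν) t := by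
  refine leftLim_eq_of_tendsto ?_
  simp only [funext (timeChange_apply T ν)]
  exact (((continuous_const_mul _).tendsto t).mono_left nhdsWithin_le_nhds).add
    (((monotone_cdf ν).tendsto_leftLim t).const_mul _)

lemma antilipschitzWith_timeChange (hT : T ≠ 0) (ν : Measure ℝ) :
    AntilipschitzWith (2 * T) (timeChange T ν) := by
  refine AntilipschitzWith.of_le_mul_dist fun a b => ?_
  wlog hab : b ≤ a generalizing a b
  · simpa only [dist_comm] using this b a (le_of_not_ge hab)
  rw [Real.dist_eq, Real.dist_eq, abs_of_nonneg (sub_nonneg.2 hab),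
    abs_of_nonneg (sub_nonneg.2 ((timeChange T ν).mono hab))]
  have := monotone_cdf ν hab
  calc a - b = (2 * (T : ℝ)) * ((2 * (T : ℝ))⁻¹ * (a - b)) :=
        (mul_inv_cancel_left₀ (by positivity) _).symm
    _ ≤ (2 * T : ℝ≥0) * (timeChange T ν a - timeChange T ν b) := by
      push_cast
      gcongr
      simp only [timeChange_apply]
      linarith

lemma tendsto_timeChange_atTop (hT : T ≠ 0) (ν : Measure ℝ) :
    Tendsto (timeChange T ν) atTop atTop := by
  have hT_pos : 0 < (2 * (T : ℝ))⁻¹ := by positivity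
  simp only [funext (timeChange_apply T ν)]
  exact (tendsto_id.const_mul_atTop hT_pos).atTop_add ((tendsto_cdf_atTop ν).const_mul _)

lemma tendsto_timeChange_atBot (hT : T ≠ 0) (ν : Measure ℝ) :
    Tendsto (timeChange T ν) atBot atBot := by
  have hT_pos : 0 < (2 * (T : ℝ))⁻¹ := by positivity
  simp only [funext (timeChange_apply T ν)]
  exact (tendsto_id.const_mul_atBot hT_pos).atBot_add ((tendsto_cdf_atBot ν).const_mul _)

lemma isJumpTimeChange_timeChange [IsProbabilityMeasure ν] (hT : T ≠ 0) {x : ℝ → ℝ}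
    (hν : ν (Icc 0 T)ᶜ = 0) (hjump : ∀ t ∈ Icc (0 : ℝ) T, leftL x t ≠ x t → ν {t} ≠ 0) :
    IsJumpTimeChange T x (timeChange T ν) where
  strictMono := (timeChange T ν).mono.strictMono_of_injective
    (antilipschitzWith_timeChange hT ν).injective
  leftLim_zero := by
    have h0 : ν (Iio 0) = 0 :=
      measure_mono_null (subset_compl_comm.1 fun t ht => ht.1.not_gt) hν
    simp [leftLim_timeChange, leftLim_cdf_eq_zero_of_measure_Iio h0]
  apply_right := by
    have hT' : ν (Ioi T) = 0 :=
      measure_mono_null (subset_compl_comm.1 fun t ht => ht.2.not_gt) hν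
    rw [timeChange_apply, cdf_eq_one_of_measure_Ioi hT']
    field_simp
    norm_num
  leftL_eq t ht h := by
    by_contra hne
    have := leftLim_cdf_lt (hjump t ht hne)
    rw [timeChange_apply, leftLim_timeChange] at h
    linarith

lemma exists_isJumpTimeChange (hT : T ≠ 0) {x : ℝ → ℝ} (hx : IsCadlagOn T x) :
    ∃ ν : Measure ℝ, IsJumpTimeChange T x (timeChange T ν) := by
  let D : Set ℝ := insert 0 {t | t ∈ Icc (0 : ℝ) T ∧ leftL x t ≠ x t}
  have hDT : D ⊆ Icc 0 (T : ℝ) :=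
    insert_subset ⟨le_rfl, T.2⟩ fun t ht => ht.1
  obtain ⟨ν, _, hν, hνD⟩ := exists_isProbabilityMeasure_singleton_ne_zero
    ((countable_setOf_leftL_ne hx).insert 0) (insert_nonempty _ _)
  exact ⟨ν, isJumpTimeChange_timeChange hT (measure_mono_null (compl_subset_compl.2 hDT) hν)
    fun t ht hne => hνD t (mem_insert_of_mem 0 ⟨ht, hne⟩)⟩

end TimeChange

lemma absContOn01_deriv {r : ℝ → ℝ} {K : ℝ≥0} (hr : LipschitzOnWith K r (Icc 0 1)) :
    AbsContOn01 r (deriv r) := by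
  have hac {s : ℝ} (hs : s ∈ Icc 0 1) : AbsolutelyContinuousOnInterval r 0 s :=
    (hr.mono (uIcc_of_le hs.1 ▸ Icc_subset_Icc_right hs.2)).absolutelyContinuousOnInterval
  refine ⟨(hac (right_mem_Icc.2 zero_le_one)).intervalIntegrable_deriv, fun s hs => ?_⟩
  rw [(hac hs).integral_deriv_eq_sub, add_sub_cancel]

/-- Lemma 4.3: every càdlàg function on `[0,T]` has a parametric representation
whose time component is absolutely continuous with derivative in `[0, 2T]` a.e. -/
theorem exists_absolutely_continuous_time_component
    (T : ℝ) (hT : 0 < T) (x : ℝ → ℝ) (hx : IsCadlagOn T x) :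
    ∃ u r r' : ℝ → ℝ, IsParamRep T x u r ∧ AbsContOn01 r r' ∧
      ∀ᵐ s ∂(MeasureTheory.volume.restrict (Set.Icc (0:ℝ) 1)),
        0 ≤ r' s ∧ r' s ≤ 2 * T := by
  lift T to ℝ≥0 using hT.le
  have hT0 : T ≠ 0 := by rintro rfl; simp at hT
  obtain ⟨ν, hf⟩ := exists_isJumpTimeChange hT0 hx
  obtain ⟨r, hr⟩ := exists_galoisConnection_stieltjesFunction (timeChange T ν)
    (tendsto_timeChange_atTop hT0 ν) (tendsto_timeChange_atBot hT0 ν)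
  have hlip : LipschitzWith (2 * T) r := lipschitzWith_of_galoisConnection
    (antilipschitzWith_timeChange hT0 ν) hr
  refine ⟨jumpInterpolation x (timeChange T ν) r, r, deriv r, hf.isParamRep hx hr,
    absContOn01_deriv hlip.lipschitzOnWith, ae_of_all _ fun s => ⟨hr.monotone_l.deriv_nonneg, ?_⟩⟩
  exact (le_abs_self _).trans (norm_deriv_le_of_lipschitz hlip)
end
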